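/- With μ₁(a,m,α;ξ) defined as the ground state energy of the quadratic form Q[a,m,α;ξ] on B¹(ℝ), one has lim_{ξ→-∞} μ₁(a,m,α;ξ) = 1/m + aα and lim_{ξ→+∞} μ₁(a,m,α;ξ) = 1 - α, for all a, m, α > 0. -/

import Mathlib

/-!
The form splits into two half-line forms, the left one being read through `t ↦ -t` with centre `-ξ`.
As `ξ → +∞` the right half-line energy is at least `1 - O(1/ξ)`: completing the square with
`g(t) = (t - ξ) t / (t + 1)`, the negative logarithmic derivative `t - ξ` of the oscillator ground
state damped so as to vanish at the interface, produces no boundary term. On the left the potential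
exceeds `ξ²`, so that side eventually costs more. The Gaussian centred at `ξ` lives on the right
half-line up to vanishing tails and attains the bound in the limit. The reflection exchanges the two
sides, so `ξ → -∞` is the same statement.
-/

open MeasureTheory Set Filter Topology

noncomputable section

/-- `B¹(ℝ₊)`-type regularity on the half line (smooth core):
`u`, `u'` and `t·u` are square integrable on `(0,∞)`. -/
def MemB1p (u : ℝ → ℝ) : Prop :=
  Differentiable ℝ u ∧
  IntegrableOn (fun t => (u t)^2) (Ioi 0) ∧
  IntegrableOn (fun t => (deriv u t)^2) (Ioi 0) ∧
  IntegrableOn (fun t => t^2 * (u t)^2) (Ioi 0)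

/-- The Robin quadratic form `q[γ,ξ]` of `-d²/dt² + (t-ξ)²` on `ℝ₊`. -/
def qRobin (γ ξ : ℝ) (u : ℝ → ℝ) : ℝ :=
  (∫ t in Ioi (0:ℝ), ((deriv u t)^2 + (t - ξ)^2 * (u t)^2)) + γ * (u 0)^2

/-- squared `L²(ℝ₊)` norm. -/
def np (u : ℝ → ℝ) : ℝ := ∫ t in Ioi (0:ℝ), (u t)^2

/-- Lowest Robin eigenvalue `λ₁(γ,ξ)`, defined variationally. -/
def lambda1 (γ ξ : ℝ) : ℝ :=
  sInf {r : ℝ | ∃ u : ℝ → ℝ, MemB1p u ∧ np u ≠ 0 ∧ r = qRobin γ ξ u / np u}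

/-- Lowest Neumann eigenvalue `λ₁^N(ξ)` (Robin with `γ = 0`). -/
def lambda1N (ξ : ℝ) : ℝ := lambda1 0 ξ

/-- Lowest Dirichlet eigenvalue `λ₁^D(ξ)`, defined variationally. -/
def lambda1D (ξ : ℝ) : ℝ :=
  sInf {r : ℝ | ∃ u : ℝ → ℝ, MemB1p u ∧ u 0 = 0 ∧ np u ≠ 0 ∧ r = qRobin 0 ξ u / np u}

/-- The de Gennes constant `Θ₀ = inf_ξ λ₁^N(ξ)`. -/
def Theta0 : ℝ := sInf (Set.range lambda1N)

/-- `B¹(ℝ)`-type regularity on the whole line (smooth core). -/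
def MemB1 (u : ℝ → ℝ) : Prop :=
  Differentiable ℝ u ∧
  Integrable (fun t => (u t)^2) ∧
  Integrable (fun t => (deriv u t)^2) ∧
  Integrable (fun t => t^2 * (u t)^2)

/-- The interface quadratic form `Q[a,m,α;ξ]` on `B¹(ℝ)`. -/
def QI (a m α ξ : ℝ) (u : ℝ → ℝ) : ℝ :=
  (∫ t in Ioi (0:ℝ), ((deriv u t)^2 + (t - ξ)^2 * (u t)^2 - α * (u t)^2)) +
  ∫ t in Iio (0:ℝ), ((1/m) * ((deriv u t)^2 + (t - ξ)^2 * (u t)^2) + a * α * (u t)^2)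

/-- squared `L²(ℝ)` norm. -/
def nR (u : ℝ → ℝ) : ℝ := ∫ t, (u t)^2

/-- Ground state energy `μ₁(a,m,α;ξ)` of the interface operator, defined variationally. -/
def mu1 (a m α ξ : ℝ) : ℝ :=
  sInf {r : ℝ | ∃ u : ℝ → ℝ, MemB1 u ∧ nR u ≠ 0 ∧ r = QI a m α ξ u / nR u}

theorem integrable_sub_sq_mul {μ : Measure ℝ} {f : ℝ → ℝ} (hf : Integrable f μ)
    (hf2 : Integrable (fun t => t ^ 2 * f t) μ) (c : ℝ) :
    Integrable (fun t => (t - c) ^ 2 * f t) μ := by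
  refine ((hf2.norm.const_mul 2).add (hf.norm.const_mul (2 * c ^ 2))).mono'
    ((by fun_prop : Continuous fun t : ℝ => (t - c) ^ 2).aestronglyMeasurable.mul hf.1)
    (Eventually.of_forall fun t => ?_)
  simp only [Pi.add_apply, norm_mul, norm_pow, Real.norm_eq_abs, sq_abs]
  nlinarith [mul_nonneg (sq_nonneg (t + c)) (abs_nonneg (f t))]

theorem integral_Ioi_add_integral_Ioi_comp_neg {E : Type*} [NormedAddCommGroup E] [NormedSpace ℝ E]
    {f : ℝ → E} (hf : Integrable f) :
    (∫ t in Ioi 0, f t) + ∫ t in Ioi 0, f (-t) = ∫ t, f t := by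
  rw [integral_comp_neg_Ioi, neg_zero, add_comm]
  exact intervalIntegral.integral_Iic_add_Ioi hf.integrableOn hf.integrableOn

theorem integral_Ioi_comp_sub_right {E : Type*} [NormedAddCommGroup E] [NormedSpace ℝ E]
    (f : ℝ → E) (a c : ℝ) : ∫ t in Ioi a, f (t - c) = ∫ t in Ioi (a - c), f t := by
  simpa [preimage_sub_const_Ioi] using
    (measurePreserving_sub_right volume c).setIntegral_preimage_emb
      (MeasurableEquiv.subRight c).measurableEmbedding f (Ioi (a - c))

theorem tendsto_integral_Ioi_comp_sub_right_atTop {E : Type*} [NormedAddCommGroup E]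
    [NormedSpace ℝ E] {f : ℝ → E} (hf : Integrable f) (a : ℝ) :
    Tendsto (fun c => ∫ t in Ioi a, f (t - c)) atTop (𝓝 (∫ t, f t)) := by
  simp only [integral_Ioi_comp_sub_right]
  exact (aecover_Ioi (tendsto_const_nhds.add_atBot
    tendsto_neg_atTop_atBot)).integral_tendsto_of_countably_generated hf

theorem tendsto_integral_Ioi_comp_sub_right_atBot {E : Type*} [NormedAddCommGroup E]
    [NormedSpace ℝ E] (f : ℝ → E) (a : ℝ) :
    Tendsto (fun c => ∫ t in Ioi a, f (t - c)) atBot (𝓝 0) := by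
  simp only [integral_Ioi_comp_sub_right]
  exact tendsto_integral_Ioi_zero (tendsto_const_nhds.add_atTop tendsto_neg_atBot_atTop)

-- Integrate `0 ≤ (u' + g u)²`, the cross term being `(g u²)' - g' u²`.
theorem integral_Ioi_riccati_le {a : ℝ} {u u' g g' : ℝ → ℝ}
    (hu : ∀ t ∈ Ici a, HasDerivAt u (u' t) t) (hg : ∀ t ∈ Ici a, HasDerivAt g (g' t) t)
    (hu2 : MemLp u 2 (volume.restrict (Ioi a))) (hu'2 : MemLp u' 2 (volume.restrict (Ioi a)))
    (hgu : MemLp (fun t => g t * u t) 2 (volume.restrict (Ioi a)))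
    (hg'u : IntegrableOn (fun t => g' t * u t ^ 2) (Ioi a)) :
    g a * u a ^ 2 + ∫ t in Ioi a, (g' t * u t ^ 2 - (g t * u t) ^ 2) ≤ ∫ t in Ioi a, u' t ^ 2 := by
  have hderiv : ∀ t ∈ Ici a, HasDerivAt (fun t => g t * u t ^ 2)
      (g' t * u t ^ 2 + 2 * (g t * u t * u' t)) t := fun t ht =>
    ((hg t ht).mul ((hu t ht).pow 2)).congr_deriv (by
      simp only [Pi.pow_apply]; push_cast; ring)
  have hint : IntegrableOn (fun t => g t * u t ^ 2) (Ioi a) :=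
    (hgu.integrable_mul hu2).congr (Eventually.of_forall fun t => by simp only [Pi.mul_apply]; ring)
  have hint' : IntegrableOn (fun t => g' t * u t ^ 2 + 2 * (g t * u t * u' t)) (Ioi a) :=
    hg'u.add ((hgu.integrable_mul hu'2).const_mul 2)
  have hboundary : ∫ t in Ioi a, (g' t * u t ^ 2 + 2 * (g t * u t * u' t)) = -(g a * u a ^ 2) := by
    rw [integral_Ioi_of_hasDerivAt_of_tendsto' hderiv hint'
      (tendsto_zero_of_hasDerivAt_of_integrableOn_Ioi
        (fun t ht => hderiv t (Ioi_subset_Ici_self ht)) hint' hint), zero_sub]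
  have hquad : IntegrableOn (fun t => g' t * u t ^ 2 - (g t * u t) ^ 2) (Ioi a) :=
    hg'u.sub hgu.integrable_sq
  calc g a * u a ^ 2 + ∫ t in Ioi a, (g' t * u t ^ 2 - (g t * u t) ^ 2)
      = ∫ t in Ioi a, ((g' t * u t ^ 2 - (g t * u t) ^ 2)
          - (g' t * u t ^ 2 + 2 * (g t * u t * u' t))) := by
        rw [integral_sub hquad hint', hboundary]; ring
    _ ≤ ∫ t in Ioi a, u' t ^ 2 :=
        integral_mono (Integrable.sub hquad hint') hu'2.integrable_sq fun t => by
          nlinarith [sq_nonneg (u' t + g t * u t)]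

namespace MemB1p

variable {u : ℝ → ℝ}

theorem integrableOn_sub_sq_mul_sq (hu : MemB1p u) (ξ : ℝ) :
    IntegrableOn (fun t => (t - ξ) ^ 2 * u t ^ 2) (Ioi 0) :=
  integrable_sub_sq_mul hu.2.1 hu.2.2.2 ξ

theorem memLp (hu : MemB1p u) : MemLp u 2 (volume.restrict (Ioi 0)) :=
  (memLp_two_iff_integrable_sq hu.1.continuous.aestronglyMeasurable).2 hu.2.1

theorem memLp_deriv (hu : MemB1p u) : MemLp (deriv u) 2 (volume.restrict (Ioi 0)) :=
  (memLp_two_iff_integrable_sq (measurable_deriv u).aestronglyMeasurable).2 hu.2.2.1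

theorem memLp_sub_mul (hu : MemB1p u) (ξ : ℝ) :
    MemLp (fun t => (t - ξ) * u t) 2 (volume.restrict (Ioi 0)) := by
  have hc := hu.1.continuous
  rw [memLp_two_iff_integrable_sq (by fun_prop)]
  simp only [mul_pow]
  exact hu.integrableOn_sub_sq_mul_sq ξ

end MemB1p

/-- The Riccati function `g` used to bound the half-line energy from below: the logarithmic
derivative `t - ξ`, up to sign, of the oscillator ground state centred at `ξ`, damped so as to
vanish at `0`. -/
def dampedRiccati (ξ t : ℝ) : ℝ := (t - ξ) * (t / (t + 1))

theorem hasDerivAt_dampedRiccati (ξ : ℝ) {t : ℝ} (ht : t + 1 ≠ 0) :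
    HasDerivAt (dampedRiccati ξ) (1 - (ξ + 1) / (t + 1) ^ 2) t := by
  refine (((hasDerivAt_id t).sub_const ξ).mul
    ((hasDerivAt_id t).div ((hasDerivAt_id t).add_const 1) ht)).congr_deriv ?_
  simp only [id, Pi.div_apply]
  field_simp
  ring

theorem abs_dampedRiccati_le (ξ : ℝ) {t : ℝ} (ht : 0 ≤ t) : |dampedRiccati ξ t| ≤ |t - ξ| := by
  rw [dampedRiccati, abs_mul, abs_of_nonneg (by positivity : 0 ≤ t / (t + 1))]
  exact mul_le_of_le_one_right (abs_nonneg _) (div_le_one_of_le₀ (by linarith) (by linarith))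

theorem one_sub_div_le_riccati_potential {ξ t : ℝ} (hξ : 5 ≤ ξ) (ht : 0 ≤ t) :
    1 - 8 / ξ ≤ 1 - (ξ + 1) / (t + 1) ^ 2 - dampedRiccati ξ t ^ 2 + (t - ξ) ^ 2 := by
  have hξ0 : 0 < ξ := by linarith
  have numerator_nonneg : 0 ≤ (t - ξ) ^ 2 * (2 * t + 1) - (ξ + 1) + 8 / ξ * (t + 1) ^ 2 := by
    -- Far from `ξ` the first term dominates, and for `t ≥ ξ / 2` the last one does.
    rcases le_total t (ξ / 2) with h | h
    · have : ξ + 1 ≤ (t - ξ) ^ 2 := by nlinarith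
      have : 0 ≤ 8 / ξ * (t + 1) ^ 2 := by positivity
      nlinarith [mul_nonneg (sq_nonneg (t - ξ)) ht]
    · have : 2 * ξ ≤ 8 / ξ * (t + 1) ^ 2 := by
        rw [div_mul_eq_mul_div, le_div_iff₀ hξ0]
        nlinarith
      have : 0 ≤ (t - ξ) ^ 2 * (2 * t + 1) := by positivity
      linarith
  have potential_eq : 1 - (ξ + 1) / (t + 1) ^ 2 - dampedRiccati ξ t ^ 2 + (t - ξ) ^ 2 - (1 - 8 / ξ)
      = ((t - ξ) ^ 2 * (2 * t + 1) - (ξ + 1) + 8 / ξ * (t + 1) ^ 2) / (t + 1) ^ 2 := by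
    rw [dampedRiccati]
    field_simp
    ring
  rw [← sub_nonneg, potential_eq]
  positivity

theorem MemB1p.memLp_dampedRiccati_mul {u : ℝ → ℝ} (hu : MemB1p u) (ξ : ℝ) :
    MemLp (fun t => dampedRiccati ξ t * u t) 2 (volume.restrict (Ioi 0)) := by
  have hum : Measurable u := hu.1.continuous.measurable
  have hgm : Measurable (dampedRiccati ξ) := by unfold dampedRiccati; fun_prop
  refine (hu.memLp_sub_mul ξ).of_le (by fun_prop) ((ae_restrict_mem measurableSet_Ioi).mono ?_)
  intro t ht
  simp only [norm_mul, Real.norm_eq_abs]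
  exact mul_le_mul_of_nonneg_right (abs_dampedRiccati_le ξ (mem_Ioi.1 ht).le) (abs_nonneg _)

theorem MemB1p.integrableOn_dampedRiccati_deriv_mul_sq {u : ℝ → ℝ} (hu : MemB1p u) (ξ : ℝ) :
    IntegrableOn (fun t => (1 - (ξ + 1) / (t + 1) ^ 2) * u t ^ 2) (Ioi 0) := by
  refine hu.2.1.bdd_mul (c := 1 + |ξ + 1|)
    (by fun_prop : Measurable fun t : ℝ => 1 - (ξ + 1) / (t + 1) ^ 2).aestronglyMeasurable
    ((ae_restrict_mem measurableSet_Ioi).mono fun t ht => ?_)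
  have ht1 : 1 ≤ (t + 1) ^ 2 := one_le_pow₀ (by linarith [mem_Ioi.1 ht])
  calc ‖1 - (ξ + 1) / (t + 1) ^ 2‖ ≤ ‖(1 : ℝ)‖ + ‖(ξ + 1) / (t + 1) ^ 2‖ := norm_sub_le _ _
    _ = 1 + |ξ + 1| / (t + 1) ^ 2 := by
        rw [norm_one, norm_div, Real.norm_eq_abs, Real.norm_of_nonneg (by positivity)]
    _ ≤ 1 + |ξ + 1| := by gcongr; exact div_le_self (abs_nonneg _) ht1

theorem one_sub_div_mul_np_le_qRobin {γ ξ : ℝ} (hγ : 0 ≤ γ) (hξ : 5 ≤ ξ) {u : ℝ → ℝ}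
    (hu : MemB1p u) : (1 - 8 / ξ) * np u ≤ qRobin γ ξ u := by
  have hpot := hu.integrableOn_sub_sq_mul_sq ξ
  have hquad : IntegrableOn (fun t => (1 - (ξ + 1) / (t + 1) ^ 2) * u t ^ 2
      - (dampedRiccati ξ t * u t) ^ 2) (Ioi 0) :=
    (hu.integrableOn_dampedRiccati_deriv_mul_sq ξ).sub (hu.memLp_dampedRiccati_mul ξ).integrable_sq
  have riccati := integral_Ioi_riccati_le (fun t _ => (hu.1 t).hasDerivAt)
    (fun t ht => hasDerivAt_dampedRiccati ξ (by linarith [mem_Ici.1 ht] : t + 1 ≠ 0))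
    hu.memLp hu.memLp_deriv (hu.memLp_dampedRiccati_mul ξ)
    (hu.integrableOn_dampedRiccati_deriv_mul_sq ξ)
  rw [dampedRiccati, zero_div, mul_zero, zero_mul, zero_add] at riccati
  have pointwise : (1 - 8 / ξ) * np u ≤ ∫ t in Ioi 0, ((1 - (ξ + 1) / (t + 1) ^ 2) * u t ^ 2
      - (dampedRiccati ξ t * u t) ^ 2 + (t - ξ) ^ 2 * u t ^ 2) := by
    rw [np, ← integral_const_mul]
    refine setIntegral_mono_on (hu.2.1.const_mul _) (hquad.add hpot) measurableSet_Ioi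
      fun t ht => ?_
    have := mul_le_mul_of_nonneg_right
      (one_sub_div_le_riccati_potential hξ (mem_Ioi.1 ht).le) (sq_nonneg (u t))
    linarith
  rw [integral_add hquad hpot] at pointwise
  have hboundary : 0 ≤ γ * u 0 ^ 2 := by positivity
  rw [qRobin, integral_add hu.2.2.1 hpot]
  linarith

theorem sq_mul_np_le_qRobin_neg {γ ξ : ℝ} (hγ : 0 ≤ γ) (hξ : 0 ≤ ξ) {u : ℝ → ℝ} (hu : MemB1p u) :
    ξ ^ 2 * np u ≤ qRobin γ (-ξ) u := by
  have hboundary : 0 ≤ γ * u 0 ^ 2 := by positivity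
  refine le_add_of_le_of_nonneg ?_ hboundary
  rw [np, ← integral_const_mul]
  refine setIntegral_mono_on (hu.2.1.const_mul _)
    (hu.2.2.1.add (hu.integrableOn_sub_sq_mul_sq (-ξ))) measurableSet_Ioi fun t ht => ?_
  have hpot : ξ ^ 2 ≤ (t - -ξ) ^ 2 := by gcongr; linarith [mem_Ioi.1 ht]
  exact le_add_of_nonneg_of_le (sq_nonneg _) (by gcongr)

theorem MemB1.memB1p {u : ℝ → ℝ} (hu : MemB1 u) : MemB1p u :=
  ⟨hu.1, hu.2.1.integrableOn, hu.2.2.1.integrableOn, hu.2.2.2.integrableOn⟩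

theorem MemB1.comp_neg {u : ℝ → ℝ} (hu : MemB1 u) : MemB1 (fun t => u (-t)) := by
  refine ⟨hu.1.comp differentiable_neg, hu.2.1.comp_neg, ?_, ?_⟩
  · simpa only [deriv_comp_neg, neg_sq] using hu.2.2.1.comp_neg
  · simpa only [neg_sq] using hu.2.2.2.comp_neg

theorem memB1_comp_neg_iff {u : ℝ → ℝ} : MemB1 (fun t => u (-t)) ↔ MemB1 u :=
  ⟨fun hu => by simpa only [neg_neg] using hu.comp_neg, MemB1.comp_neg⟩

theorem nR_comp_neg (u : ℝ → ℝ) : nR (fun t => u (-t)) = nR u :=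
  integral_neg_eq_self (fun t => u t ^ 2) volume

theorem nR_eq_np_add_np {u : ℝ → ℝ} (hu : MemB1 u) : nR u = np u + np (fun t => u (-t)) :=
  (integral_Ioi_add_integral_Ioi_comp_neg hu.2.1).symm

/-- The quadratic form of the operator `p (-d²/dt² + (t-ξ)²) + q` on `t > 0` and
`r (-d²/dt² + (t-ξ)²) + s` on `t < 0`, the left half-line being reflected onto the right one.
It agrees with `QI a m α ξ` for `p = 1`, `q = -α`, `r = 1/m`, `s = aα`. -/
def interfaceForm (p q r s ξ : ℝ) (u : ℝ → ℝ) : ℝ :=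
  (p * qRobin 0 ξ u + q * np u) +
    (r * qRobin 0 (-ξ) (fun t => u (-t)) + s * np (fun t => u (-t)))

/-- The ground state energy of `interfaceForm p q r s ξ`, defined variationally on `B¹(ℝ)`. -/
def interfaceEnergy (p q r s ξ : ℝ) : ℝ :=
  sInf {x : ℝ | ∃ u : ℝ → ℝ, MemB1 u ∧ nR u ≠ 0 ∧ x = interfaceForm p q r s ξ u / nR u}

theorem interfaceForm_comp_neg (p q r s ξ : ℝ) (u : ℝ → ℝ) :
    interfaceForm p q r s ξ (fun t => u (-t)) = interfaceForm r s p q (-ξ) u := by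
  simp only [interfaceForm, neg_neg]
  exact add_comm _ _

theorem interfaceEnergy_neg (p q r s ξ : ℝ) :
    interfaceEnergy p q r s (-ξ) = interfaceEnergy r s p q ξ := by
  have reflect_surjective : Function.Surjective fun (u : ℝ → ℝ) t => u (-t) :=
    Function.Involutive.surjective fun u => by simp only [neg_neg]
  refine congrArg sInf (Set.ext fun x => reflect_surjective.exists.trans ?_)
  simp only [memB1_comp_neg_iff, nR_comp_neg, interfaceForm_comp_neg, neg_neg, mem_ofPred_eq]

theorem QI_eq_interfaceForm (a m α ξ : ℝ) {u : ℝ → ℝ} (hu : MemB1 u) :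
    QI a m α ξ u = interfaceForm 1 (-α) (1 / m) (a * α) ξ u := by
  have energy_integrable (c : ℝ) {v : ℝ → ℝ} (hv : MemB1 v) :
      IntegrableOn (fun t => deriv v t ^ 2 + (t - c) ^ 2 * v t ^ 2) (Ioi 0) :=
    hv.memB1p.2.2.1.add (hv.memB1p.integrableOn_sub_sq_mul_sq c)
  have reflect_sq (t : ℝ) : (-t - ξ) ^ 2 = (t - -ξ) ^ 2 := by ring
  have right : ∫ t in Ioi 0, (deriv u t ^ 2 + (t - ξ) ^ 2 * u t ^ 2 - α * u t ^ 2)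
      = 1 * qRobin 0 ξ u + -α * np u := by
    rw [integral_sub (energy_integrable ξ hu) (hu.memB1p.2.1.const_mul α), integral_const_mul,
      qRobin, np]
    ring
  have left : ∫ t in Iio 0, (1 / m * (deriv u t ^ 2 + (t - ξ) ^ 2 * u t ^ 2) + a * α * u t ^ 2)
      = 1 / m * qRobin 0 (-ξ) (fun t => u (-t)) + a * α * np (fun t => u (-t)) := by
    have hv := hu.comp_neg
    have reflect := integral_comp_neg_Ioi 0
      fun t => 1 / m * (deriv u t ^ 2 + (t - ξ) ^ 2 * u t ^ 2) + a * α * u t ^ 2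
    rw [neg_zero] at reflect
    rw [← integral_Iic_eq_integral_Iio, ← reflect, qRobin, np, zero_mul,
      add_zero, ← integral_const_mul, ← integral_const_mul, ← integral_add
        ((energy_integrable (-ξ) hv).const_mul _) (hv.memB1p.2.1.const_mul _)]
    simp only [deriv_comp_neg, neg_sq, reflect_sq]
  rw [QI, right, left, interfaceForm]

theorem mu1_eq_interfaceEnergy (a m α ξ : ℝ) :
    mu1 a m α ξ = interfaceEnergy 1 (-α) (1 / m) (a * α) ξ := by
  refine congrArg sInf (Set.ext fun x => exists_congr fun u => and_congr_right fun hu => ?_)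
  rw [QI_eq_interfaceForm a m α ξ hu]

theorem mul_nR_le_interfaceForm {p q r s ξ : ℝ} (hp : 0 ≤ p) (hr : 0 ≤ r) (hξ : 5 ≤ ξ)
    (hleft : p + q ≤ r * ξ ^ 2 + s) {u : ℝ → ℝ} (hu : MemB1 u) :
    (p * (1 - 8 / ξ) + q) * nR u ≤ interfaceForm p q r s ξ u := by
  have np_nonneg : 0 ≤ np fun t => u (-t) := integral_nonneg fun t => sq_nonneg _
  have hleft' : p * (1 - 8 / ξ) + q ≤ r * ξ ^ 2 + s := by
    have : 0 ≤ p * (8 / ξ) := by positivity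
    linarith
  have right := mul_le_mul_of_nonneg_left (one_sub_div_mul_np_le_qRobin le_rfl hξ hu.memB1p) hp
  have left := mul_le_mul_of_nonneg_left
    (sq_mul_np_le_qRobin_neg le_rfl (by linarith : 0 ≤ ξ) hu.comp_neg.memB1p) hr
  rw [nR_eq_np_add_np hu, interfaceForm]
  linarith [mul_le_mul_of_nonneg_right hleft' np_nonneg]

theorem integrable_sq_mul_exp_neg_mul_sq {b : ℝ} (hb : 0 < b) :
    Integrable fun x : ℝ => x ^ 2 * Real.exp (-b * x ^ 2) := by
  simpa using integrable_rpow_mul_exp_neg_mul_sq hb (by norm_num : (-1 : ℝ) < 2)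

theorem integral_sq_mul_exp_neg_mul_sq {b : ℝ} (hb : 0 < b) :
    ∫ x : ℝ, x ^ 2 * Real.exp (-b * x ^ 2) = √(Real.pi / b) / (2 * b) := by
  have hI := integrable_exp_neg_mul_sq hb
  have hI2 := (integrable_sq_mul_exp_neg_mul_sq hb).const_mul (2 * b)
  have by_parts :
      ∫ x : ℝ, (Real.exp (-b * x ^ 2) - 2 * b * (x ^ 2 * Real.exp (-b * x ^ 2))) = 0 := by
    refine integral_eq_zero_of_hasDerivAt_of_integrable (fun x => ?_) (hI.sub hI2)
      (integrable_mul_exp_neg_mul_sq hb)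
    refine ((hasDerivAt_id x).mul (((hasDerivAt_id x).pow 2).const_mul (-b)).exp).congr_deriv ?_
    simp only [id, Pi.pow_apply, Nat.cast_ofNat]
    ring
  rw [integral_sub hI hI2, integral_const_mul, integral_gaussian] at by_parts
  rw [eq_div_iff (by positivity)]
  linarith

/-- The unnormalised ground state of the harmonic oscillator `-d²/dt² + (t-ξ)²` on `ℝ`, used as a
test function. -/
def oscillatorGround (ξ t : ℝ) : ℝ := Real.exp (-(t - ξ) ^ 2 / 2)

theorem oscillatorGround_sq (ξ t : ℝ) : oscillatorGround ξ t ^ 2 = Real.exp (-1 * (t - ξ) ^ 2) := by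
  rw [oscillatorGround, ← Real.exp_nat_mul]
  congr 1
  push_cast
  ring

theorem oscillatorGround_comp_neg (ξ : ℝ) :
    (fun t => oscillatorGround ξ (-t)) = oscillatorGround (-ξ) := by
  funext t
  simp only [oscillatorGround]
  congr 1
  ring

theorem hasDerivAt_oscillatorGround (ξ t : ℝ) :
    HasDerivAt (oscillatorGround ξ) (-(t - ξ) * oscillatorGround ξ t) t := by
  refine ((((hasDerivAt_id t).sub_const ξ).pow 2).neg.div_const 2).exp.congr_deriv ?_
  simp only [oscillatorGround, id, Pi.pow_apply, Pi.neg_apply, Nat.cast_ofNat]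
  ring

theorem deriv_oscillatorGround_sq (ξ t : ℝ) :
    deriv (oscillatorGround ξ) t ^ 2 = (t - ξ) ^ 2 * Real.exp (-1 * (t - ξ) ^ 2) := by
  rw [(hasDerivAt_oscillatorGround ξ t).deriv, mul_pow, oscillatorGround_sq, neg_sq]

theorem memB1_oscillatorGround (ξ : ℝ) : MemB1 (oscillatorGround ξ) := by
  have hI := integrable_exp_neg_mul_sq one_pos
  have hI2 := integrable_sq_mul_exp_neg_mul_sq one_pos
  refine ⟨fun t => (hasDerivAt_oscillatorGround ξ t).differentiableAt, ?_, ?_, ?_⟩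
  · simpa only [oscillatorGround_sq] using hI.comp_sub_right ξ
  · simpa only [deriv_oscillatorGround_sq] using hI2.comp_sub_right ξ
  · simpa only [oscillatorGround_sq, sub_neg_eq_add, sub_add_cancel] using
      (integrable_sub_sq_mul hI hI2 (-ξ)).comp_sub_right ξ

theorem nR_oscillatorGround (ξ : ℝ) : nR (oscillatorGround ξ) = √Real.pi := by
  simp only [nR, oscillatorGround_sq]
  rw [integral_sub_right_eq_self (fun x : ℝ => Real.exp (-1 * x ^ 2)) ξ, integral_gaussian, div_one]

theorem np_oscillatorGround (ξ : ℝ) :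
    np (oscillatorGround ξ) = ∫ t in Ioi 0, Real.exp (-1 * (t - ξ) ^ 2) := by
  simp only [np, oscillatorGround_sq]

theorem qRobin_oscillatorGround (ξ : ℝ) : qRobin 0 ξ (oscillatorGround ξ) =
    ∫ t in Ioi 0, 2 * ((t - ξ) ^ 2 * Real.exp (-1 * (t - ξ) ^ 2)) := by
  simp only [qRobin, oscillatorGround_sq, deriv_oscillatorGround_sq, two_mul, zero_mul, add_zero]

theorem tendsto_np_oscillatorGround_atTop :
    Tendsto (fun ξ => np (oscillatorGround ξ)) atTop (𝓝 √Real.pi) := by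
  simpa only [np_oscillatorGround, integral_gaussian, div_one] using
    tendsto_integral_Ioi_comp_sub_right_atTop (integrable_exp_neg_mul_sq one_pos) 0

theorem tendsto_np_oscillatorGround_atBot :
    Tendsto (fun ξ => np (oscillatorGround ξ)) atBot (𝓝 0) := by
  simpa only [np_oscillatorGround] using
    tendsto_integral_Ioi_comp_sub_right_atBot (fun x => Real.exp (-1 * x ^ 2)) 0

theorem tendsto_qRobin_oscillatorGround_atTop :
    Tendsto (fun ξ => qRobin 0 ξ (oscillatorGround ξ)) atTop (𝓝 √Real.pi) := by
  have h := tendsto_integral_Ioi_comp_sub_right_atTop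
    ((integrable_sq_mul_exp_neg_mul_sq one_pos).const_mul 2) 0
  rw [integral_const_mul, integral_sq_mul_exp_neg_mul_sq one_pos, div_one, mul_one,
    mul_div_cancel₀ _ two_ne_zero] at h
  simpa only [qRobin_oscillatorGround] using h

theorem tendsto_qRobin_oscillatorGround_atBot :
    Tendsto (fun ξ => qRobin 0 ξ (oscillatorGround ξ)) atBot (𝓝 0) := by
  simpa only [qRobin_oscillatorGround] using
    tendsto_integral_Ioi_comp_sub_right_atBot (fun x => 2 * (x ^ 2 * Real.exp (-1 * x ^ 2))) 0

theorem tendsto_interfaceForm_oscillatorGround_div (p q r s : ℝ) :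
    Tendsto (fun ξ => interfaceForm p q r s ξ (oscillatorGround ξ) / nR (oscillatorGround ξ))
      atTop (𝓝 (p + q)) := by
  have right := (tendsto_qRobin_oscillatorGround_atTop.const_mul p).add
    (tendsto_np_oscillatorGround_atTop.const_mul q)
  have left := ((tendsto_qRobin_oscillatorGround_atBot.const_mul r).add
    (tendsto_np_oscillatorGround_atBot.const_mul s)).comp tendsto_neg_atTop_atBot
  have h := (right.add left).div_const √Real.pi
  rw [mul_zero, mul_zero, add_zero, add_zero, ← add_mul,
    mul_div_cancel_right₀ _ (by positivity)] at h
  simpa only [interfaceForm, oscillatorGround_comp_neg, nR_oscillatorGround, Function.comp_apply]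
    using h

theorem tendsto_interfaceEnergy_atTop {p r : ℝ} (q s : ℝ) (hp : 0 ≤ p) (hr : 0 < r) :
    Tendsto (interfaceEnergy p q r s) atTop (𝓝 (p + q)) := by
  have lower_tendsto : Tendsto (fun ξ : ℝ => p * (1 - 8 / ξ) + q) atTop (𝓝 (p + q)) := by
    have : Tendsto (fun ξ : ℝ => 8 / ξ) atTop (𝓝 0) := tendsto_const_nhds.div_atTop tendsto_id
    simpa using ((this.const_sub 1).const_mul p).add_const q
  have left_dominates : ∀ᶠ ξ : ℝ in atTop, p + q ≤ r * ξ ^ 2 + s :=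
    (tendsto_atTop_add_const_right _ s
      ((tendsto_pow_atTop two_ne_zero).const_mul_atTop hr)).eventually_ge_atTop (p + q)
  have lower_bound : ∀ᶠ ξ : ℝ in atTop, ∀ u, MemB1 u → nR u ≠ 0 →
      p * (1 - 8 / ξ) + q ≤ interfaceForm p q r s ξ u / nR u := by
    filter_upwards [eventually_ge_atTop 5, left_dominates] with ξ hξ hleft u hu hn
    have nR_pos : 0 < nR u := (integral_nonneg fun t => sq_nonneg (u t)).lt_of_ne' hn
    exact (le_div_iff₀ nR_pos).2 (mul_nR_le_interfaceForm hp hr.le hξ hleft hu)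
  have ground_ne (ξ : ℝ) : nR (oscillatorGround ξ) ≠ 0 := by rw [nR_oscillatorGround]; positivity
  refine tendsto_of_tendsto_of_tendsto_of_le_of_le' lower_tendsto
    (tendsto_interfaceForm_oscillatorGround_div p q r s) ?_ ?_
  · filter_upwards [lower_bound] with ξ h
    refine le_csInf ⟨_, _, memB1_oscillatorGround ξ, ground_ne ξ, rfl⟩ ?_
    rintro _ ⟨u, hu, hn, rfl⟩
    exact h u hu hn
  · filter_upwards [lower_bound] with ξ h
    refine csInf_le ⟨p * (1 - 8 / ξ) + q, ?_⟩ ⟨_, memB1_oscillatorGround ξ, ground_ne ξ, rfl⟩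
    rintro _ ⟨u, hu, hn, rfl⟩
    exact h u hu hn

theorem tendsto_interfaceEnergy_atBot {p r : ℝ} (q s : ℝ) (hp : 0 < p) (hr : 0 ≤ r) :
    Tendsto (interfaceEnergy p q r s) atBot (𝓝 (r + s)) := by
  refine ((tendsto_interfaceEnergy_atTop s q hr hp).comp tendsto_neg_atBot_atTop).congr fun ξ => ?_
  exact interfaceEnergy_neg r s p q ξ

theorem mu1_limits_general (a α : ℝ) {m : ℝ} (hm : 0 < m) :
    Tendsto (fun ξ => mu1 a m α ξ) atBot (𝓝 (1 / m + a * α)) ∧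
    Tendsto (fun ξ => mu1 a m α ξ) atTop (𝓝 (1 - α)) := by
  simp only [mu1_eq_interfaceEnergy, sub_eq_add_neg]
  exact ⟨tendsto_interfaceEnergy_atBot _ _ one_pos (by positivity),
    tendsto_interfaceEnergy_atTop _ _ zero_le_one (by positivity)⟩

/-- `μ₁(a,m,α;ξ) → 1/m + aα` as `ξ → -∞` and `μ₁(a,m,α;ξ) → 1 - α`
as `ξ → +∞`. -/
theorem mu1_limits (a m α : ℝ) (ha : 0 < a) (hm : 0 < m) (hα : 0 < α) :
    Tendsto (fun ξ => mu1 a m α ξ) atBot (𝓝 (1/m + a * α)) ∧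
    Tendsto (fun ξ => mu1 a m α ξ) atTop (𝓝 (1 - α)) :=
  mu1_limits_general a α hm
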